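/- (Second-order convergence of nonlocal to local solutions in the uniform norm.) Let d ≥ 1, let Ω ⊂ ℝ^d be bounded and open, let δ₀ ∈ (0,1], μ ∈ {0,1}, and A, B, M > 0. Then there is a constant C > 0, depending only on d, Ω, δ₀, A, B, M, with the following property. Let δ ∈ (0,δ₀], let γ̃ satisfy the radial kernel conditions with horizon δ in dimension d and ∫_{B_δ(0)} γ̃(|z|) dz < ∞, and let Ω_δ^c, Ω̂_δ be as defined. Let u₀ : ℝ^d → ℝ be four times continuously differentiable on an open neighborhood of the closure of Ω̂_δ with ‖D^j u₀(y)‖ ≤ M for all y ∈ Ω̂_δ and j = 0,1,2,3,4, and set f₀ = −Δu₀ on Ω. Let f_δ : Ω → ℝ satisfy sup_{x∈Ω} |f_δ(x) − f₀(x)| ≤ A δ², let g_δ : Ω_δ^c → ℝ satisfy sup_{x∈Ω_δ^c} |g_δ(x) − u₀(x)| ≤ B δ^{2+μ}, and let u : Ω̂_δ → ℝ be bounded and measurable with −2∫_{Ω̂_δ} (u(y) − u(x)) γ̃(|y−x|) dy = f_δ(x) for every x ∈ Ω and u = g_δ on Ω_δ^c. Then sup_{x∈Ω} |u(x) − u₀(x)|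 ≤ C δ². -/

import Mathlib

open MeasureTheory Metric Set

noncomputable section

/-- Surface measure of the unit sphere in `ℝ^d`, expressed as `d` times the volume
of the unit ball. -/
def unitSphereArea (d : ℕ) : ℝ :=
  d * (volume (ball (0 : EuclideanSpace ℝ (Fin d)) 1)).toReal

/-- The radial kernel conditions with horizon `δ` in dimension `d`. -/
def RadialKernel (d : ℕ) (δ : ℝ) (γ : ℝ → ℝ) : Prop :=
  Measurable γ ∧ (∀ s, 0 < s → s < δ → 0 < γ s) ∧ (∀ s, δ ≤ s → γ s = 0) ∧
    IntegrableOn γ (Ioo 0 δ) ∧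
    unitSphereArea d * (∫ s in Ioo 0 δ, s ^ (d + 1) * γ s) = d

/-- The part of the complement of `Ω` within distance `δ` of the boundary. -/
def omegaC {d : ℕ} (Ω : Set (EuclideanSpace ℝ (Fin d))) (δ : ℝ) :
    Set (EuclideanSpace ℝ (Fin d)) :=
  {y | y ∉ Ω ∧ infDist y (frontier Ω) < δ}

/-- `Ω̂_δ = Ω ∪ Ω_δ^c`. -/
def hatΩ {d : ℕ} (Ω : Set (EuclideanSpace ℝ (Fin d))) (δ : ℝ) :
    Set (EuclideanSpace ℝ (Fin d)) :=
  Ω ∪ omegaC Ω δ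

/-- The Laplacian of `u : ℝ^d → ℝ`, as the trace of the second derivative. -/
def lap (d : ℕ) (u : EuclideanSpace ℝ (Fin d) → ℝ) (x : EuclideanSpace ℝ (Fin d)) : ℝ :=
  ∑ i : Fin d, iteratedFDeriv ℝ 2 u x ![EuclideanSpace.single i 1, EuclideanSpace.single i 1]

/-!
Write the nonlocal operator as `L w x = 2 ∫ (w (x + z) - w x) dρ(z)`, where `ρ` has density
`γ ‖z‖`. Expand `u₀` at `x` to third order: the odd terms integrate to zero because `ρ` is invariant
under `z ↦ -z`, and the quadratic term gives exactly `Δ u₀ x`, by rotation invariance and the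
normalization of the second moment. The fourth-order remainder is at most `M δ² ‖z‖² / 24`, so
`|L u₀ - Δ u₀| ≤ d M δ² / 12` on `Ω`. The error `w = u - u₀` therefore satisfies `|L w| = O(δ²)` on
`Ω` and `|w| = O(δ²)` on `Ω_δ^c`. Since `L ‖·‖² = 2 d`, adding a small multiple of `‖·‖²` to `±w`
makes `L` strictly positive, and the maximum principle bounds `w` by its values on `Ω_δ^c` plus
that multiple.
-/

section

open Module InnerProductSpace Laplacian
open scoped Nat

theorem norm_sub_sum_iteratedFDeriv_le {E F : Type*} [NormedAddCommGroup E]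
    [NormedSpace ℝ E] [NormedAddCommGroup F] [NormedSpace ℝ F] [CompleteSpace F]
    {f : E → F} {x y : E} {n : ℕ} {M : ℝ}
    (hf : ∀ t ∈ Icc (0 : ℝ) 1, ContDiffAt ℝ (n + 1) f (x + t • y))
    (hM : ∀ t ∈ Icc (0 : ℝ) 1, ‖iteratedFDeriv ℝ (n + 1) f (x + t • y)‖ ≤ M) :
    ‖f (x + y) - ∑ k ∈ Finset.range (n + 1), (k ! : ℝ)⁻¹ • iteratedFDeriv ℝ k f x fun _ ↦ y‖ ≤
      M * ‖y‖ ^ (n + 1) / (n + 1)! := by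
  have hint : ‖∫ t in (0 : ℝ)..1, (1 - t) ^ n • iteratedFDeriv ℝ (n + 1) f (x + t • y) fun _ ↦ y‖ ≤
      ∫ t in (0 : ℝ)..1, (1 - t) ^ n * (M * ‖y‖ ^ (n + 1)) := by
    refine intervalIntegral.norm_integral_le_of_norm_le zero_le_one (.of_forall fun t ht ↦ ?_)
      (Continuous.intervalIntegrable (by fun_prop) _ _)
    have ht' : 0 ≤ 1 - t := sub_nonneg.2 ht.2
    rw [norm_smul, Real.norm_of_nonneg (pow_nonneg ht' n)]
    gcongr
    simpa using (iteratedFDeriv ℝ (n + 1) f (x + t • y)).le_of_opNorm_le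
      (hM t ⟨ht.1.le, ht.2⟩) fun _ ↦ y
  have hpow : ∫ t in (0 : ℝ)..1, (1 - t) ^ n = ((n : ℝ) + 1)⁻¹ := by
    simp [intervalIntegral.integral_comp_sub_left (fun t : ℝ ↦ t ^ n) 1]
  rw [intervalIntegral.integral_mul_const, hpow] at hint
  rw [map_add_eq_sum_add_integral_iteratedFDeriv hf, add_sub_cancel_left, norm_smul, norm_inv,
    Real.norm_natCast]
  refine (mul_le_mul_of_nonneg_left hint (by positivity)).trans_eq ?_
  rw [Nat.factorial_succ]
  push_cast
  field_simp

section NonlocalLaplacian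

variable {E : Type*} [Add E] [MeasurableSpace E] {ρ : Measure E}

/-- The nonlocal Laplacian `2 ∫ (w (x + z) - w x) dρ(z)` attached to an interaction measure `ρ`.
The nonlocal equation of the theorem is `-nonlocalLaplacian ρ u = f` for the measure `ρ` with
density `γ ‖z‖`. -/
def nonlocalLaplacian (ρ : Measure E) (w : E → ℝ) (x : E) : ℝ :=
  2 * ∫ z, (w (x + z) - w x) ∂ρ

theorem nonlocalLaplacian_const_mul (c : ℝ) (w : E → ℝ) (x : E) :
    nonlocalLaplacian ρ (fun y ↦ c * w y) x = c * nonlocalLaplacian ρ w x := by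
  simp only [nonlocalLaplacian, ← mul_sub, integral_const_mul]
  ring

theorem nonlocalLaplacian_neg (w : E → ℝ) (x : E) :
    nonlocalLaplacian ρ (fun y ↦ -w y) x = -nonlocalLaplacian ρ w x := by
  simpa using nonlocalLaplacian_const_mul (ρ := ρ) (-1) w x

variable [IsFiniteMeasure ρ]

theorem nonlocalLaplacian_add {v w : E → ℝ} {x : E} (hv : Integrable (fun z ↦ v (x + z)) ρ)
    (hw : Integrable (fun z ↦ w (x + z)) ρ) :
    nonlocalLaplacian ρ (fun y ↦ v y + w y) x =
      nonlocalLaplacian ρ v x + nonlocalLaplacian ρ w x := by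
  simp only [nonlocalLaplacian, add_sub_add_comm]
  refine (congrArg (2 * ·) (integral_add (hv.sub (integrable_const (v x)))
    (hw.sub (integrable_const (w x))))).trans (mul_add _ _ _)

theorem nonlocalLaplacian_sub {v w : E → ℝ} {x : E} (hv : Integrable (fun z ↦ v (x + z)) ρ)
    (hw : Integrable (fun z ↦ w (x + z)) ρ) :
    nonlocalLaplacian ρ (fun y ↦ v y - w y) x =
      nonlocalLaplacian ρ v x - nonlocalLaplacian ρ w x := by
  simpa only [sub_eq_add_neg, nonlocalLaplacian_neg] using
    nonlocalLaplacian_add (w := fun y ↦ -w y) hv hw.fun_neg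

/-- Near a point where `w` almost attains its supremum over `Ω`, the increments of `w` are too small
for the nonlocal Laplacian to stay above `η`. -/
theorem le_of_forall_le_nonlocalLaplacian {Ω : Set E} {w : E → ℝ} {b η : ℝ} (hη : 0 < η)
    (hw : BddAbove (w '' Ω)) (hL : ∀ x ∈ Ω, η ≤ nonlocalLaplacian ρ w x)
    (hb : ∀ x ∈ Ω, ∀ᵐ z ∂ρ, x + z ∉ Ω → w (x + z) ≤ b) : ∀ x ∈ Ω, w x ≤ b := by
  intro x₀ hx₀
  by_contra! hlt
  set S := sSup (w '' Ω)
  have hle : ∀ y ∈ Ω, w y ≤ S := fun y hy ↦ le_csSup hw (mem_image_of_mem w hy)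
  set ε := η / (2 * (ρ.real univ + 1))
  have hε : 0 < ε := by positivity
  obtain ⟨_, ⟨x, hx, rfl⟩, hxS⟩ :=
    exists_lt_of_lt_csSup ⟨w x₀, mem_image_of_mem w hx₀⟩ (sub_lt_self S hε)
  have hincr : ∀ᵐ z ∂ρ, w (x + z) - w x ≤ ε := by
    filter_upwards [hb x hx] with z hz
    by_cases hmem : x + z ∈ Ω
    · linarith [hle _ hmem]
    · linarith [hz hmem, hle x₀ hx₀]
  have hint : Integrable (fun z ↦ w (x + z) - w x) ρ :=
    .of_integral_ne_zero fun h0 ↦ hη.not_ge <| by simpa [nonlocalLaplacian, h0] using hL x hx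
  have hsmall : nonlocalLaplacian ρ w x < η := calc
    nonlocalLaplacian ρ w x ≤ 2 * ∫ _, ε ∂ρ := by
      unfold nonlocalLaplacian
      gcongr ?_ * ?_
      exact integral_mono_ae hint (integrable_const ε) hincr
    _ = η * (ρ.real univ / (ρ.real univ + 1)) := by
      rw [integral_const, smul_eq_mul]
      simp only [ε]
      field_simp
    _ < η := mul_lt_of_lt_one_right hη <| (div_lt_one (by positivity)).2 (lt_add_one _)
  exact hsmall.not_ge (hL x hx)

end NonlocalLaplacian

section BoundedSupport

variable {E F : Type*} [NormedAddCommGroup E] [MeasurableSpace E] [NormedAddCommGroup F]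
  {ρ : Measure E} {r K : ℝ}

theorem integrable_comp_add [IsFiniteMeasure ρ] (hsupp : ∀ᵐ z ∂ρ, ‖z‖ < r) {w : E → F} {x : E}
    (hw : AEStronglyMeasurable (fun z ↦ w (x + z)) ρ) (hK : ∀ y ∈ ball x r, ‖w y‖ ≤ K) :
    Integrable (fun z ↦ w (x + z)) ρ := by
  refine .of_bound hw K ?_
  filter_upwards [hsupp] with z hz using hK _ (by simpa using hz)

variable [OpensMeasurableSpace E]

theorem aestronglyMeasurable_comp_add [SecondCountableTopologyEither E F]
    (hsupp : ∀ᵐ z ∂ρ, ‖z‖ < r) {w : E → F} {x : E} (hw : ContinuousOn w (ball x r)) :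
    AEStronglyMeasurable (fun z ↦ w (x + z)) ρ := by
  have hmaps : MapsTo (x + ·) (ball 0 r) (ball x r) := fun z hz ↦ by simpa using hz
  have hrestrict : ρ.restrict (ball 0 r) = ρ :=
    Measure.restrict_eq_self_of_ae_mem (by simpa using hsupp)
  rw [← hrestrict]
  exact (hw.comp (continuous_const_add x).continuousOn hmaps).aestronglyMeasurable
    measurableSet_ball

theorem integrable_of_continuous [ProperSpace E] [IsFiniteMeasure ρ] (hsupp : ∀ᵐ z ∂ρ, ‖z‖ < r)
    {g : E → F} (hg : Continuous g) : Integrable g ρ := by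
  obtain ⟨K, hK⟩ := (isCompact_closedBall (0 : E) r).exists_bound_of_continuousOn hg.continuousOn
  refine .of_bound hg.aestronglyMeasurable K ?_
  filter_upwards [hsupp] with z hz using hK z (by simpa using hz.le)

end BoundedSupport

section OrthogonalInvariance

variable {E F : Type*} [NormedAddCommGroup E] [InnerProductSpace ℝ E] [MeasurableSpace E]
  [NormedAddCommGroup F] [NormedSpace ℝ F] {ρ : Measure E}

/-- Invariance of a measure under the orthogonal group of `E`, as enjoyed by every measure with a
radial density. -/
def IsOrthogonallyInvariant (ρ : Measure E) : Prop :=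
  ∀ L : E ≃ₗᵢ[ℝ] E, MeasurePreserving L ρ ρ

theorem integrable_inner_mul_inner [OpensMeasurableSpace E] [SecondCountableTopology E]
    (hint : Integrable (fun z ↦ ‖z‖ ^ 2) ρ) (v w : E) :
    Integrable (fun z ↦ ⟪v, z⟫_ℝ * ⟪w, z⟫_ℝ) ρ := by
  refine (hint.const_mul (‖v‖ * ‖w‖)).mono' (by fun_prop) (.of_forall fun z ↦ ?_)
  calc ‖⟪v, z⟫_ℝ * ⟪w, z⟫_ℝ‖ ≤ (‖v‖ * ‖z‖) * (‖w‖ * ‖z‖) := by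
        rw [norm_mul]
        gcongr <;> exact norm_inner_le_norm _ _
    _ = ‖v‖ * ‖w‖ * ‖z‖ ^ 2 := by ring

namespace IsOrthogonallyInvariant

variable [BorelSpace E]

theorem integral_comp (hρ : IsOrthogonallyInvariant ρ) (L : E ≃ₗᵢ[ℝ] E) (g : E → F) :
    ∫ z, g (L z) ∂ρ = ∫ z, g z ∂ρ :=
  (hρ L).integral_comp L.toHomeomorph.measurableEmbedding g

theorem integral_eq_zero (hρ : IsOrthogonallyInvariant ρ) (L : E ≃ₗᵢ[ℝ] E) {g : E → F}
    (hg : ∀ z, g (L z) = -g z) : ∫ z, g z ∂ρ = 0 := by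
  have h := hρ.integral_comp L g
  simp only [hg, integral_neg] at h
  have := IsAddTorsionFree.of_isTorsionFree ℝ F
  exact self_eq_neg.1 h.symm

theorem integral_multilinear_of_odd (hρ : IsOrthogonallyInvariant ρ) {k : ℕ} (hk : Odd k)
    (T : MultilinearMap ℝ (fun _ : Fin k ↦ E) F) : ∫ z, T (fun _ ↦ z) ∂ρ = 0 := by
  refine hρ.integral_eq_zero (.neg ℝ) fun z ↦ ?_
  simpa [hk.neg_one_pow] using T.map_smul_univ (fun _ ↦ (-1 : ℝ)) fun _ ↦ z

theorem integral_inner_mul_self_eq (hρ : IsOrthogonallyInvariant ρ) {v w : E} (h : ‖v‖ = ‖w‖) :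
    ∫ z, ⟪v, z⟫_ℝ * ⟪v, z⟫_ℝ ∂ρ = ∫ z, ⟪w, z⟫_ℝ * ⟪w, z⟫_ℝ ∂ρ := by
  set L := (ℝ ∙ (v - w))ᗮ.reflection
  have hLv : L v = w := Submodule.reflection_sub h
  rw [← hρ.integral_comp L (fun z ↦ ⟪w, z⟫_ℝ * ⟪w, z⟫_ℝ), ← hLv]
  simp only [LinearIsometryEquiv.inner_map_map]

theorem integral_inner_mul_inner_eq_zero (hρ : IsOrthogonallyInvariant ρ) {v w : E}
    (h : ⟪v, w⟫_ℝ = 0) : ∫ z, ⟪v, z⟫_ℝ * ⟪w, z⟫_ℝ ∂ρ = 0 := by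
  set L := (ℝ ∙ v)ᗮ.reflection
  have hLv : L v = -v := Submodule.reflection_orthogonalComplement_singleton_eq_neg v
  have hLw : L w = w := Submodule.reflection_mem_subspace_eq_self
    (Submodule.mem_orthogonal_singleton_iff_inner_right.2 h)
  refine hρ.integral_eq_zero L fun z ↦ ?_
  rw [← neg_neg ⟪v, L z⟫_ℝ, ← inner_neg_left, ← hLv, ← neg_mul_eq_neg_mul]
  conv_lhs => rw [← hLw]
  simp only [LinearIsometryEquiv.inner_map_map]

variable [FiniteDimensional ℝ E] [CompleteSpace F] {ι : Type*} [Fintype ι]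

theorem finrank_mul_integral_inner_mul_self (hρ : IsOrthogonallyInvariant ρ)
    (hint : Integrable (fun z ↦ ‖z‖ ^ 2) ρ) (b : OrthonormalBasis ι ℝ E) (i : ι) :
    finrank ℝ E * ∫ z, ⟪b i, z⟫_ℝ * ⟪b i, z⟫_ℝ ∂ρ = ∫ z, ‖z‖ ^ 2 ∂ρ := calc
  finrank ℝ E * ∫ z, ⟪b i, z⟫_ℝ * ⟪b i, z⟫_ℝ ∂ρ = ∑ j, ∫ z, ⟪b j, z⟫_ℝ * ⟪b j, z⟫_ℝ ∂ρ := by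
    rw [Finset.sum_congr rfl fun j _ ↦ hρ.integral_inner_mul_self_eq (by simp : ‖b j‖ = ‖b i‖)]
    simp [finrank_eq_card_basis b.toBasis]
  _ = ∫ z, ‖z‖ ^ 2 ∂ρ := by
    rw [← integral_finsetSum _ fun j _ ↦ integrable_inner_mul_inner hint (b j) (b j)]
    simp only [← pow_two, b.sum_sq_inner_right]

theorem finrank_smul_integral_bilin (hρ : IsOrthogonallyInvariant ρ)
    (hint : Integrable (fun z ↦ ‖z‖ ^ 2) ρ) (b : OrthonormalBasis ι ℝ E)
    (T : E →ₗ[ℝ] E →ₗ[ℝ] F) :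
    (finrank ℝ E : ℝ) • ∫ z, T z z ∂ρ = (∫ z, ‖z‖ ^ 2 ∂ρ) • ∑ i, T (b i) (b i) := by
  have hexpand (z : E) : T z z = ∑ i, ∑ j, (⟪b i, z⟫_ℝ * ⟪b j, z⟫_ℝ) • T (b i) (b j) := by
    conv_lhs => rw [← b.sum_repr' z]
    simp only [map_sum, map_smul, LinearMap.sum_apply, LinearMap.smul_apply, Finset.smul_sum,
      smul_smul]
    exact Finset.sum_comm.trans <| by simp only [mul_comm]
  have hintegrable (i j : ι) :
      Integrable (fun z ↦ (⟪b i, z⟫_ℝ * ⟪b j, z⟫_ℝ) • T (b i) (b j)) ρ :=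
    (integrable_inner_mul_inner hint (b i) (b j)).smul_const _
  rw [integral_congr_ae (.of_forall hexpand),
    integral_finsetSum _ fun i _ ↦ integrable_finsetSum _ fun j _ ↦ hintegrable i j,
    Finset.smul_sum, Finset.smul_sum]
  refine Finset.sum_congr rfl fun i _ ↦ ?_
  rw [integral_finsetSum _ fun j _ ↦ hintegrable i j, Finset.sum_eq_single i]
  · rw [integral_smul_const, smul_smul, hρ.finrank_mul_integral_inner_mul_self hint]
  · intro j _ hji
    rw [integral_smul_const,
      hρ.integral_inner_mul_inner_eq_zero (b.inner_eq_zero hji.symm), zero_smul]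
  · simp

end IsOrthogonallyInvariant

end OrthogonalInvariance

section DiffusionKernel

variable {E : Type*} [NormedAddCommGroup E] [InnerProductSpace ℝ E] [MeasurableSpace E]
  {ρ : Measure E} {r : ℝ}

/-- A finite measure on `E` that interacts within distance `r` and is normalized so that
`nonlocalLaplacian ρ` agrees with the Laplacian on quadratic polynomials. -/
structure IsDiffusionKernel (ρ : Measure E) (r : ℝ) : Prop extends IsFiniteMeasure ρ where
  isOrthogonallyInvariant : IsOrthogonallyInvariant ρ
  ae_norm_lt : ∀ᵐ z ∂ρ, ‖z‖ < r
  integral_norm_sq : ∫ z, ‖z‖ ^ 2 ∂ρ = finrank ℝ E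

namespace IsDiffusionKernel

variable [FiniteDimensional ℝ E] [BorelSpace E]

theorem integrable (hρ : IsDiffusionKernel ρ r) {F : Type*} [NormedAddCommGroup F] {g : E → F}
    (hg : Continuous g) : Integrable g ρ :=
  have := hρ.toIsFiniteMeasure
  integrable_of_continuous hρ.ae_norm_lt hg

theorem nonlocalLaplacian_norm_sq (hρ : IsDiffusionKernel ρ r) (x : E) :
    nonlocalLaplacian ρ (fun y ↦ ‖y‖ ^ 2) x = 2 * finrank ℝ E := by
  have hlin : ∫ z, 2 * ⟪x, z⟫_ℝ ∂ρ = 0 :=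
    hρ.isOrthogonallyInvariant.integral_eq_zero (.neg ℝ) (by simp)
  simp only [nonlocalLaplacian, norm_add_sq_real, add_assoc, add_sub_cancel_left]
  rw [integral_add (hρ.integrable (by fun_prop)) (hρ.integrable (by fun_prop)), hlin, zero_add,
    hρ.integral_norm_sq]

variable [Nontrivial E]

theorem integral_iteratedFDeriv_two (hρ : IsDiffusionKernel ρ r) {F : Type*}
    [NormedAddCommGroup F] [NormedSpace ℝ F] [CompleteSpace F] (u : E → F) (x : E) :
    ∫ z, iteratedFDeriv ℝ 2 u x (fun _ ↦ z) ∂ρ = Δ u x := by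
  have hdiag (e : E) : iteratedFDeriv ℝ 2 u x (fun _ ↦ e) =
      bilinearIteratedFDerivTwo ℝ u x e e := by
    simp [bilinearIteratedFDerivTwo_eq_iteratedFDeriv, iteratedFDeriv_two_apply]
  have htrace := hρ.isOrthogonallyInvariant.finrank_smul_integral_bilin
    (hρ.integrable (by fun_prop)) (stdOrthonormalBasis ℝ E) (bilinearIteratedFDerivTwo ℝ u x)
  rw [hρ.integral_norm_sq] at htrace
  simp only [hdiag, laplacian_eq_iteratedFDeriv_stdOrthonormalBasis,
    ← bilinearIteratedFDerivTwo_eq_iteratedFDeriv]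
  exact smul_right_injective F (Nat.cast_ne_zero.2 finrank_pos.ne') htrace

theorem integral_taylor_sub (hρ : IsDiffusionKernel ρ r) (u : E → ℝ) (x : E) :
    ∫ z, (∑ k ∈ Finset.range 4, (k ! : ℝ)⁻¹ • iteratedFDeriv ℝ k u x (fun _ ↦ z) - u x) ∂ρ =
      Δ u x / 2 := by
  have hodd {k : ℕ} (hk : Odd k) : ∫ z, iteratedFDeriv ℝ k u x (fun _ ↦ z) ∂ρ = 0 :=
    hρ.isOrthogonallyInvariant.integral_multilinear_of_odd hk
      (iteratedFDeriv ℝ k u x).toMultilinearMap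
  have hint (k : ℕ) :
      Integrable (fun z ↦ (k ! : ℝ)⁻¹ • iteratedFDeriv ℝ k u x (fun _ ↦ z)) ρ :=
    hρ.integrable (by fun_prop)
  simp only [Finset.sum_range_succ' _ 3, iteratedFDeriv_zero_apply, Nat.factorial_zero,
    Nat.cast_one, inv_one, one_smul, add_sub_cancel_right]
  rw [integral_finsetSum _ fun k _ ↦ hint (k + 1)]
  simp only [integral_smul, Finset.sum_range_succ, Finset.sum_range_zero, zero_add, Nat.reduceAdd,
    hodd odd_one, hodd (k := 3) (by decide), hρ.integral_iteratedFDeriv_two, smul_zero, add_zero]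
  rw [Nat.factorial_two, smul_eq_mul, Nat.cast_ofNat, inv_mul_eq_div]

theorem abs_nonlocalLaplacian_sub_laplacian_le (hρ : IsDiffusionKernel ρ r) {u : E → ℝ} {x : E}
    {M : ℝ} (hu : ContDiffOn ℝ 4 u (ball x r)) (hM : ∀ y ∈ ball x r, ‖iteratedFDeriv ℝ 4 u y‖ ≤ M)
    (hint : Integrable (fun z ↦ u (x + z)) ρ) :
    |nonlocalLaplacian ρ u x - Δ u x| ≤ finrank ℝ E * M / 12 * r ^ 2 := by
  have := hρ.toIsFiniteMeasure
  set P : E → ℝ := fun z ↦ ∑ k ∈ Finset.range 4, (k ! : ℝ)⁻¹ • iteratedFDeriv ℝ k u x fun _ ↦ z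
  have hP : Integrable P ρ := hρ.integrable (by fun_prop)
  have hremainder : ∀ᵐ z ∂ρ, ‖u (x + z) - P z‖ ≤ M * r ^ 2 / 24 * ‖z‖ ^ 2 := by
    filter_upwards [hρ.ae_norm_lt] with z hz
    have hsegment (t : ℝ) (ht : t ∈ Icc 0 1) : x + t • z ∈ ball x r := by
      simpa [norm_smul, abs_of_nonneg ht.1] using
        (mul_le_of_le_one_left (norm_nonneg z) ht.2).trans_lt hz
    have hM0 : 0 ≤ M := (norm_nonneg _).trans <| hM _ (hsegment 0 (by simp))
    calc ‖u (x + z) - P z‖ ≤ M * ‖z‖ ^ 4 / 4 ! :=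
          norm_sub_sum_iteratedFDeriv_le
            (fun t ht ↦ hu.contDiffAt (isOpen_ball.mem_nhds (hsegment t ht)))
            fun t ht ↦ hM _ (hsegment t ht)
      _ = M * ‖z‖ ^ 2 / 24 * ‖z‖ ^ 2 := by
          norm_num [Nat.factorial]
          ring
      _ ≤ M * r ^ 2 / 24 * ‖z‖ ^ 2 := by gcongr
  have hdiff : nonlocalLaplacian ρ u x - Δ u x = 2 * ∫ z, (u (x + z) - P z) ∂ρ := by
    have hsplit : ∫ z, (u (x + z) - P z) ∂ρ = ∫ z, (u (x + z) - u x) ∂ρ - ∫ z, (P z - u x) ∂ρ := by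
      rw [← integral_sub (f := fun z ↦ u (x + z) - u x) (g := fun z ↦ P z - u x)
        (hint.sub (integrable_const _)) (hP.sub (integrable_const _))]
      simp only [sub_sub_sub_cancel_right]
    rw [nonlocalLaplacian, hsplit, hρ.integral_taylor_sub]
    ring
  calc |nonlocalLaplacian ρ u x - Δ u x| = 2 * ‖∫ z, (u (x + z) - P z) ∂ρ‖ := by
        rw [hdiff, abs_mul, abs_two, Real.norm_eq_abs]
    _ ≤ 2 * ∫ z, M * r ^ 2 / 24 * ‖z‖ ^ 2 ∂ρ := by
        gcongr
        exact norm_integral_le_of_norm_le (hρ.integrable (by fun_prop)) hremainder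
    _ = finrank ℝ E * M / 12 * r ^ 2 := by
        rw [integral_const_mul, hρ.integral_norm_sq]
        ring

end IsDiffusionKernel

end DiffusionKernel

section Stability

variable {E : Type*} [NormedAddCommGroup E] [InnerProductSpace ℝ E] [FiniteDimensional ℝ E]
  [MeasurableSpace E] [BorelSpace E] [Nontrivial E] {ρ : Measure E} {δ : ℝ} {Ω : Set E}

namespace IsDiffusionKernel

/-- The barrier is `η * ‖y‖ ^ 2`, whose nonlocal Laplacian `2 * finrank ℝ E * η` exceeds `η`. -/
theorem le_add_of_neg_le_nonlocalLaplacian (hρ : IsDiffusionKernel ρ δ) {w : E → ℝ} {b η R : ℝ}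
    (hη : 0 < η) (hδ : 0 < δ) (hR : ∀ y ∈ thickening δ Ω, ‖y‖ ≤ R)
    (hint : ∀ x ∈ Ω, Integrable (fun z ↦ w (x + z)) ρ) (hw : BddAbove (w '' Ω))
    (hL : ∀ x ∈ Ω, -η ≤ nonlocalLaplacian ρ w x)
    (hb : ∀ y ∈ thickening δ Ω \ Ω, w y ≤ b) : ∀ x ∈ Ω, w x ≤ b + η * R ^ 2 := by
  have := hρ.toIsFiniteMeasure
  have hbarrier {y : E} (hy : y ∈ thickening δ Ω) : η * ‖y‖ ^ 2 ≤ η * R ^ 2 := by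
    gcongr
    exact hR y hy
  obtain ⟨K, hK⟩ := hw
  have hLadd (x : E) (hx : x ∈ Ω) :
      nonlocalLaplacian ρ (fun y ↦ w y + η * ‖y‖ ^ 2) x =
        nonlocalLaplacian ρ w x + η * (2 * finrank ℝ E) := by
    rw [nonlocalLaplacian_add (hint x hx) (hρ.integrable (by fun_prop)),
      nonlocalLaplacian_const_mul, hρ.nonlocalLaplacian_norm_sq]
  have hdim : (1 : ℝ) ≤ finrank ℝ E := mod_cast finrank_pos
  have hmax : ∀ x ∈ Ω, w x + η * ‖x‖ ^ 2 ≤ b + η * R ^ 2 := by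
    refine le_of_forall_le_nonlocalLaplacian (ρ := ρ) hη ⟨K + η * R ^ 2, ?_⟩ (fun x hx ↦ ?_)
      fun x hx ↦ ?_
    · rintro _ ⟨x, hx, rfl⟩
      exact add_le_add (hK (mem_image_of_mem w hx)) (hbarrier (self_subset_thickening hδ Ω hx))
    · rw [hLadd x hx]
      nlinarith [hL x hx]
    · filter_upwards [hρ.ae_norm_lt] with z hz hmem
      have hnear : x + z ∈ thickening δ Ω := mem_thickening_iff.2 ⟨x, hx, by simpa using hz⟩
      exact add_le_add (hb _ ⟨hnear, hmem⟩) (hbarrier hnear)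
  exact fun x hx ↦ (le_add_of_nonneg_right (by positivity)).trans (hmax x hx)

theorem abs_le_add_of_abs_nonlocalLaplacian_le (hρ : IsDiffusionKernel ρ δ) {w : E → ℝ}
    {b η R K : ℝ} (hη : 0 < η) (hδ : 0 < δ) (hR : ∀ y ∈ thickening δ Ω, ‖y‖ ≤ R)
    (hint : ∀ x ∈ Ω, Integrable (fun z ↦ w (x + z)) ρ) (hw : ∀ x ∈ Ω, |w x| ≤ K)
    (hL : ∀ x ∈ Ω, |nonlocalLaplacian ρ w x| ≤ η)
    (hb : ∀ y ∈ thickening δ Ω \ Ω, |w y| ≤ b) : ∀ x ∈ Ω, |w x| ≤ b + η * R ^ 2 := by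
  refine fun x hx ↦ abs_le'.2 ⟨?_, ?_⟩
  · exact hρ.le_add_of_neg_le_nonlocalLaplacian hη hδ hR hint
      ⟨K, forall_mem_image.2 fun y hy ↦ (abs_le.1 (hw y hy)).2⟩ (fun y hy ↦ (abs_le.1 (hL y hy)).1)
      (fun y hy ↦ (abs_le.1 (hb y hy)).2) x hx
  · refine hρ.le_add_of_neg_le_nonlocalLaplacian (w := fun y ↦ -w y) hη hδ hR
      (fun y hy ↦ (hint y hy).fun_neg)
      ⟨K, forall_mem_image.2 fun y hy ↦ (neg_le_abs _).trans (hw y hy)⟩ (fun y hy ↦ ?_)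
      (fun y hy ↦ (neg_le_abs _).trans (hb y hy)) x hx
    rw [nonlocalLaplacian_neg]
    exact neg_le_neg ((le_abs_self _).trans (hL y hy))

theorem abs_sub_le_of_abs_nonlocalLaplacian_sub_laplacian_le (hρ : IsDiffusionKernel ρ δ)
    {u v : E → ℝ} {a b M R K K' : ℝ} (ha : 0 < a) (hδ : 0 < δ)
    (hR : ∀ y ∈ thickening δ Ω, ‖y‖ ≤ R)
    (hu : Measurable u) (huK : ∀ y ∈ thickening δ Ω, |u y| ≤ K)
    (hv : ContDiffOn ℝ 4 v (thickening δ Ω)) (hvK : ∀ y ∈ thickening δ Ω, |v y| ≤ K')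
    (hvM : ∀ y ∈ thickening δ Ω, ‖iteratedFDeriv ℝ 4 v y‖ ≤ M)
    (hL : ∀ x ∈ Ω, |nonlocalLaplacian ρ u x - Δ v x| ≤ a)
    (hb : ∀ y ∈ thickening δ Ω \ Ω, |u y - v y| ≤ b) :
    ∀ x ∈ Ω, |u x - v x| ≤ b + (a + finrank ℝ E * M / 12 * δ ^ 2) * R ^ 2 := by
  intro x₀ hx₀
  have := hρ.toIsFiniteMeasure
  have hΩ : Ω ⊆ thickening δ Ω := self_subset_thickening hδ Ω
  have hball {x : E} (hx : x ∈ Ω) : ball x δ ⊆ thickening δ Ω := ball_subset_thickening hx δ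
  have hM : 0 ≤ M := (norm_nonneg _).trans (hvM _ (hΩ hx₀))
  have huint (x : E) (hx : x ∈ Ω) : Integrable (fun z ↦ u (x + z)) ρ :=
    integrable_comp_add hρ.ae_norm_lt (hu.comp (measurable_const_add x)).aestronglyMeasurable
      fun y hy ↦ huK y (hball hx hy)
  have hvint (x : E) (hx : x ∈ Ω) : Integrable (fun z ↦ v (x + z)) ρ :=
    integrable_comp_add hρ.ae_norm_lt
      (aestronglyMeasurable_comp_add hρ.ae_norm_lt (hv.continuousOn.mono (hball hx)))
      fun y hy ↦ hvK y (hball hx hy)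
  refine hρ.abs_le_add_of_abs_nonlocalLaplacian_le (by positivity) hδ hR
    (fun x hx ↦ (huint x hx).sub (hvint x hx)) (K := K + K')
    (fun x hx ↦ (abs_sub _ _).trans (add_le_add (huK x (hΩ hx)) (hvK x (hΩ hx))))
    (fun x hx ↦ ?_) hb x₀ hx₀
  have hcons := hρ.abs_nonlocalLaplacian_sub_laplacian_le (hv.mono (hball hx))
    (fun y hy ↦ hvM y (hball hx hy)) (hvint x hx)
  rw [nonlocalLaplacian_sub (huint x hx) (hvint x hx)]
  rw [abs_sub_comm] at hcons
  exact (abs_sub_le _ _ _).trans (add_le_add (hL x hx) hcons)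

end IsDiffusionKernel

end Stability

section RadialMeasure

section Norm

variable {E : Type*} [NormedAddCommGroup E] [MeasurableSpace E] {μ : Measure E} {γ : ℝ → ℝ} {δ : ℝ}

/-- The measure with density `γ ‖z‖` with respect to `μ`, negative values of `γ` being replaced
by `0`. -/
def radialMeasure (μ : Measure E) (γ : ℝ → ℝ) : Measure E :=
  μ.withDensity fun z ↦ ENNReal.ofReal (γ ‖z‖)

theorem isOrthogonallyInvariant_radialMeasure [InnerProductSpace ℝ E] [BorelSpace E]
    (hμ : IsOrthogonallyInvariant μ) (γ : ℝ → ℝ) :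
    IsOrthogonallyInvariant (radialMeasure μ γ) := by
  refine fun L ↦ ⟨L.continuous.measurable, Measure.ext fun s hs ↦ ?_⟩
  rw [Measure.map_apply L.continuous.measurable hs, radialMeasure, withDensity_apply _ hs,
    withDensity_apply _ (L.continuous.measurable hs)]
  simpa only [L.norm_map] using (hμ L).setLIntegral_comp_preimage_emb
    L.toHomeomorph.measurableEmbedding (fun z ↦ ENNReal.ofReal (γ ‖z‖)) s

variable [OpensMeasurableSpace E]

theorem ae_radialMeasure_norm_lt (hγ : Measurable γ) (hδ : ∀ s, δ ≤ s → γ s = 0) :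
    ∀ᵐ z ∂radialMeasure μ γ, ‖z‖ < δ := by
  refine (ae_withDensity_iff (by fun_prop)).2 (.of_forall fun z hz ↦ ?_)
  contrapose! hz
  simp [hδ _ hz]

theorem integral_radialMeasure [NullSingletonClass μ] {F : Type*} [NormedAddCommGroup F]
    [NormedSpace ℝ F] (hγ : Measurable γ) (hpos : ∀ s, 0 < s → 0 ≤ γ s) (g : E → F) :
    ∫ z, g z ∂radialMeasure μ γ = ∫ z, γ ‖z‖ • g z ∂μ := by
  rw [radialMeasure, integral_withDensity_eq_integral_toReal_smul (by fun_prop) (by simp)]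
  refine integral_congr_ae ?_
  filter_upwards [Measure.ae_ne μ 0] with z hz
  rw [ENNReal.toReal_ofReal (hpos _ (norm_pos_iff.2 hz))]

end Norm

namespace RadialKernel

variable {d : ℕ} {δ : ℝ} {γ : ℝ → ℝ}

theorem nonneg (hγ : RadialKernel d δ γ) {s : ℝ} (hs : 0 < s) : 0 ≤ γ s :=
  (lt_or_ge s δ).elim (fun h ↦ (hγ.2.1 s hs h).le) fun h ↦ (hγ.2.2.1 s h).ge

theorem eq_zero (hγ : RadialKernel d δ γ) {s : ℝ} (hs : δ ≤ s) : γ s = 0 := hγ.2.2.1 s hs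

variable [NeZero d]

theorem integral_radialMeasure (hγ : RadialKernel d δ γ) (g : EuclideanSpace ℝ (Fin d) → ℝ) :
    ∫ z, g z ∂radialMeasure volume γ = ∫ z, γ ‖z‖ * g z :=
  _root_.integral_radialMeasure hγ.1 (fun _ ↦ hγ.nonneg) g

theorem integrable_comp_norm (hγ : RadialKernel d δ γ) :
    Integrable fun z : EuclideanSpace ℝ (Fin d) ↦ γ ‖z‖ := by
  have hball : IntegrableOn (fun z : EuclideanSpace ℝ (Fin d) ↦ γ ‖z‖) (ball 0 δ) := by
    rw [integrableOn_fun_norm_addHaar]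
    exact hγ.2.2.2.1.continuousOn_mul_of_subset (by fun_prop) isCompact_Icc measurableSet_Ioo
      Ioo_subset_Icc_self
  refine (integrableOn_iff_integrable_of_support_subset fun z hz ↦ ?_).1 hball
  contrapose! hz
  simp [hγ.eq_zero (by simpa using hz)]

theorem integral_norm_sq_radialMeasure (hγ : RadialKernel d δ γ) :
    ∫ z : EuclideanSpace ℝ (Fin d), ‖z‖ ^ 2 ∂radialMeasure volume γ = d := by
  have hpolar : ∫ s in Ioi (0 : ℝ), s ^ (d - 1) * (γ s * s ^ 2) =
      ∫ s in Ioo 0 δ, s ^ (d + 1) * γ s := calc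
    _ = ∫ s in Ioi (0 : ℝ), s ^ (d + 1) * γ s := by
      congr! 2 with s
      rw [← Nat.sub_add_cancel (NeZero.one_le : 1 ≤ d)]
      simp only [add_tsub_cancel_right]
      ring
    _ = ∫ s in Ioo 0 δ, s ^ (d + 1) * γ s :=
      setIntegral_eq_of_subset_of_forall_sdiff_eq_zero measurableSet_Ioi Ioo_subset_Ioi_self
        fun s hs ↦ by rw [hγ.eq_zero (not_lt.1 fun h ↦ hs.2 ⟨hs.1, h⟩), mul_zero]
  rw [hγ.integral_radialMeasure, integral_fun_norm_addHaar volume fun s ↦ γ s * s ^ 2,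
    finrank_euclideanSpace_fin]
  simp only [smul_eq_mul, nsmul_eq_mul, hpolar]
  rw [← mul_assoc]
  exact hγ.2.2.2.2

theorem isDiffusionKernel_radialMeasure (hγ : RadialKernel d δ γ) :
    IsDiffusionKernel (radialMeasure (volume : Measure (EuclideanSpace ℝ (Fin d))) γ) δ where
  toIsFiniteMeasure := isFiniteMeasure_withDensity_ofReal hγ.integrable_comp_norm.hasFiniteIntegral
  isOrthogonallyInvariant :=
    isOrthogonallyInvariant_radialMeasure (fun L ↦ L.measurePreserving) γ
  ae_norm_lt := ae_radialMeasure_norm_lt hγ.1 fun _ ↦ hγ.eq_zero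
  integral_norm_sq := by rw [hγ.integral_norm_sq_radialMeasure, finrank_euclideanSpace_fin]

theorem two_mul_setIntegral_eq_nonlocalLaplacian (hγ : RadialKernel d δ γ)
    (u : EuclideanSpace ℝ (Fin d) → ℝ) {x : EuclideanSpace ℝ (Fin d)}
    {s : Set (EuclideanSpace ℝ (Fin d))} (hs : ball x δ ⊆ s) :
    2 * ∫ y in s, (u y - u x) * γ ‖y - x‖ = nonlocalLaplacian (radialMeasure volume γ) u x := by
  have hoff : ∀ y ∉ s, (u y - u x) * γ ‖y - x‖ = 0 := fun y hy ↦ by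
    have hyx : δ ≤ ‖y - x‖ := by simpa [dist_eq_norm] using fun h ↦ hy (hs h)
    rw [hγ.eq_zero hyx, mul_zero]
  rw [nonlocalLaplacian, hγ.integral_radialMeasure,
    setIntegral_eq_integral_of_forall_compl_eq_zero hoff, ← integral_add_left_eq_self _ x]
  simp only [add_sub_cancel_left, mul_comm]

end RadialKernel

end RadialMeasure

theorem hatΩ_eq_thickening {d : ℕ} {Ω : Set (EuclideanSpace ℝ (Fin d))} {δ : ℝ}
    (hΩ : Ω.Nonempty) (hδ : 0 < δ) : hatΩ Ω δ = thickening δ Ω := by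
  refine Subset.antisymm (union_subset (self_subset_thickening hδ Ω) fun y ⟨hy, hdist⟩ ↦ ?_)
    fun y hy ↦ or_iff_not_imp_left.2 fun hyΩ ↦ ⟨hyΩ, ?_⟩
  · have hne : Ω ≠ univ := fun h ↦ hy (h ▸ mem_univ y)
    obtain ⟨p, hp, hyp⟩ := (infDist_lt_iff (nonempty_frontier_iff.2 ⟨hΩ, hne⟩)).1 hdist
    rw [mem_thickening_iff_infDist_lt hΩ, ← infDist_closure]
    exact (infDist_le_dist_of_mem (frontier_subset_closure hp)).trans_lt hyp
  · obtain ⟨p, hp, hyp⟩ := exists_mem_frontier_infDist_compl_eq_dist (s := Ωᶜ) hyΩ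
      (by simpa using hΩ.ne_empty)
    rw [compl_compl] at hyp
    rw [frontier_compl] at hp
    exact (infDist_le_dist_of_mem hp).trans_lt <|
      hyp ▸ (mem_thickening_iff_infDist_lt hΩ).1 hy

theorem lap_eq_laplacian {d : ℕ} (u : EuclideanSpace ℝ (Fin d) → ℝ) : lap d u = Δ u := by
  rw [laplacian_eq_iteratedFDeriv_orthonormalBasis u (EuclideanSpace.basisFun (Fin d) ℝ)]
  simp only [EuclideanSpace.basisFun_apply]
  rfl

theorem stmt4_general (d : ℕ) (hd : 1 ≤ d) (Ω : Set (EuclideanSpace ℝ (Fin d)))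
    (hΩb : Bornology.IsBounded Ω) (δ₀ A B M : ℝ) (hA : 0 < A) (hB : 0 < B) (hM : 0 < M) :
    ∃ C > 0, ∀ δ ∈ Ioc 0 δ₀, ∀ γ : ℝ → ℝ, RadialKernel d δ γ →
      ∀ u₀ : EuclideanSpace ℝ (Fin d) → ℝ, ContDiffOn ℝ 4 u₀ (hatΩ Ω δ) →
        (∃ K : ℝ, ∀ y ∈ hatΩ Ω δ, |u₀ y| ≤ K) →
        (∀ y ∈ hatΩ Ω δ, ‖iteratedFDeriv ℝ 4 u₀ y‖ ≤ M) →
      ∀ f : EuclideanSpace ℝ (Fin d) → ℝ,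
        (∀ x ∈ Ω, |f x - (-(lap d u₀ x))| ≤ A * δ ^ 2) →
      ∀ g : EuclideanSpace ℝ (Fin d) → ℝ,
        (∀ x ∈ omegaC Ω δ, |g x - u₀ x| ≤ B * δ ^ 2) →
      ∀ u : EuclideanSpace ℝ (Fin d) → ℝ, Measurable u →
        (∃ K : ℝ, ∀ x ∈ hatΩ Ω δ, |u x| ≤ K) →
        (∀ x ∈ Ω, -(2 * ∫ y in hatΩ Ω δ, (u y - u x) * γ ‖y - x‖) = f x) →
        (∀ x ∈ omegaC Ω δ, u x = g x) →
      ∀ x ∈ Ω, |u x - u₀ x| ≤ C * δ ^ 2 := by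
  have : NeZero d := ⟨Nat.one_le_iff_ne_zero.1 hd⟩
  obtain ⟨R, hR⟩ := hΩb.exists_norm_le
  refine ⟨B + (A + d * M / 12) * (R + δ₀) ^ 2, by positivity, fun δ hδ γ hγ u₀ hu₀ hu₀K hu₀M
    f hf g hg u hu huK hLu hug x hx ↦ ?_⟩
  have hhat : hatΩ Ω δ = thickening δ Ω := hatΩ_eq_thickening ⟨x, hx⟩ hδ.1
  have hcollar : ∀ y ∈ thickening δ Ω \ Ω, |u y - u₀ y| ≤ B * δ ^ 2 := fun y ⟨hy, hyΩ⟩ ↦ by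
    have hyc : y ∈ omegaC Ω δ := (hhat.symm ▸ hy : y ∈ hatΩ Ω δ).resolve_left hyΩ
    exact hug y hyc ▸ hg y hyc
  have hbound : ∀ y ∈ thickening δ Ω, ‖y‖ ≤ R + δ₀ := fun y hy ↦ by
    obtain ⟨p, hp, hyp⟩ := mem_thickening_iff.1 hy
    rw [dist_eq_norm] at hyp
    linarith [hR p hp, norm_le_norm_add_norm_sub p y, norm_sub_rev p y, hδ.2]
  have hresidual : ∀ y ∈ Ω,
      |nonlocalLaplacian (radialMeasure volume γ) u y - Δ u₀ y| ≤ A * δ ^ 2 := fun y hy ↦ by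
    rw [← hγ.two_mul_setIntegral_eq_nonlocalLaplacian u (ball_subset_thickening hy δ), ← hhat,
      ← neg_neg (2 * _), hLu y hy, ← lap_eq_laplacian, abs_sub_comm]
    simpa only [sub_neg_eq_add, add_comm] using hf y hy
  rw [hhat] at hu₀ hu₀K hu₀M huK
  obtain ⟨⟨K, hK⟩, ⟨K', hK'⟩⟩ := huK, hu₀K
  have hρ := hγ.isDiffusionKernel_radialMeasure
  have hmain := hρ.abs_sub_le_of_abs_nonlocalLaplacian_sub_laplacian_le
    (by have := hδ.1; positivity) hδ.1 hbound hu hK hu₀ hK' hu₀M hresidual hcollar x hx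
  rw [finrank_euclideanSpace_fin] at hmain
  exact hmain.trans_eq (by ring)

end

/-- second-order convergence of nonlocal to local solutions in the
uniform norm. -/
theorem stmt4 (d : ℕ) (hd : 1 ≤ d) (Ω : Set (EuclideanSpace ℝ (Fin d)))
    (hΩb : Bornology.IsBounded Ω) (hΩo : IsOpen Ω)
    (δ₀ : ℝ) (hδ₀ : δ₀ ∈ Ioc (0 : ℝ) 1) (μ : ℕ) (hμ : μ = 0 ∨ μ = 1)
    (A B M : ℝ) (hA : 0 < A) (hB : 0 < B) (hM : 0 < M) :
    ∃ C > 0, ∀ δ ∈ Ioc (0 : ℝ) δ₀, ∀ γ : ℝ → ℝ, RadialKernel d δ γ →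
      IntegrableOn (fun z : EuclideanSpace ℝ (Fin d) => γ ‖z‖) (ball 0 δ) →
      ∀ u₀ : EuclideanSpace ℝ (Fin d) → ℝ,
        (∃ V, IsOpen V ∧ closure (hatΩ Ω δ) ⊆ V ∧ ContDiffOn ℝ 4 u₀ V) →
        (∀ y ∈ hatΩ Ω δ, ∀ j ≤ 4, ‖iteratedFDeriv ℝ j u₀ y‖ ≤ M) →
      ∀ f : EuclideanSpace ℝ (Fin d) → ℝ,
        (∀ x ∈ Ω, |f x - (-(lap d u₀ x))| ≤ A * δ ^ 2) →
      ∀ g : EuclideanSpace ℝ (Fin d) → ℝ,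
        (∀ x ∈ omegaC Ω δ, |g x - u₀ x| ≤ B * δ ^ (2 + μ)) →
      ∀ u : EuclideanSpace ℝ (Fin d) → ℝ, Measurable u →
        (∃ Mu : ℝ, ∀ x ∈ hatΩ Ω δ, |u x| ≤ Mu) →
        (∀ x ∈ Ω, -(2 * ∫ y in hatΩ Ω δ, (u y - u x) * γ ‖y - x‖) = f x) →
        (∀ x ∈ omegaC Ω δ, u x = g x) →
      ∀ x ∈ Ω, |u x - u₀ x| ≤ C * δ ^ 2 := by
  obtain ⟨C, hC, hmain⟩ := stmt4_general d hd Ω hΩb δ₀ A B M hA hB hM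
  refine ⟨C, hC, fun δ hδ γ hγ _ u₀ ⟨V, _, hV, hu₀⟩ hM f hf g hg ↦ ?_⟩
  have hδ' : δ ^ (2 + μ) ≤ δ ^ 2 :=
    pow_le_pow_of_le_one hδ.1.le (hδ.2.trans hδ₀.2) (Nat.le_add_right 2 μ)
  exact hmain δ hδ γ hγ u₀ (hu₀.mono (subset_closure.trans hV))
    ⟨M, fun y hy ↦ by simpa using hM y hy 0 (by simp)⟩ (fun y hy ↦ hM y hy 4 le_rfl) f hf g
    fun y hy ↦ (hg y hy).trans (by gcongr)
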